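/- arXiv:2305.18672 — 5 statements merged into one kernel-verified Lean document; each statement's English description precedes it below -/
import Mathlib

section
/- The set {log ε(n) : n ∈ 𝒯} is linearly independent over ℚ; that is, for any finite collection of distinct integers n₁, …, n_N ∈ 𝒯 and any integers k₁, …, k_N not all zero, one has k₁·log ε(n₁) + ⋯ + k_N·log ε(n_N) ≠ 0. -/
/-- `ε(n) = (n + √(n² − 4))/2`. -/
noncomputable def eps (n : ℤ) : ℝ := ((n : ℝ) + Real.sqrt ((n : ℝ) ^ 2 - 4)) / 2

/-- The set `𝒯` of integers `n ≥ 3` such that `ε(n)` is not a proper power `ε(n₀)^k`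
with `k ≥ 2`, `n₀ ≥ 3`. -/
def Tset : Set ℤ :=
  {n : ℤ | 3 ≤ n ∧ ¬ ∃ k : ℕ, 2 ≤ k ∧ ∃ n₀ : ℤ, 3 ≤ n₀ ∧ eps n = eps n₀ ^ k}

lemma eps_aux (n : ℤ) (hn : 3 ≤ n) : ∃ s : ℝ, 0 < s ∧ s ^ 2 = (n : ℝ) ^ 2 - 4 ∧
    eps n = (n + s) / 2 ∧ (eps n)⁻¹ = (n - s) / 2 ∧ 1 < eps n := by
  have hn' : (3 : ℝ) ≤ n := by exact_mod_cast hn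
  have hpos : (0 : ℝ) < (n : ℝ) ^ 2 - 4 := by nlinarith
  have h1 : 0 < Real.sqrt ((n : ℝ) ^ 2 - 4) := Real.sqrt_pos.2 hpos
  have h2 : Real.sqrt ((n : ℝ) ^ 2 - 4) ^ 2 = (n : ℝ) ^ 2 - 4 := Real.sq_sqrt hpos.le
  refine ⟨_, h1, h2, rfl, ?_, ?_⟩
  · apply inv_eq_of_mul_eq_one_right
    unfold eps
    nlinarith
  · unfold eps
    linarith

lemma eps_of_add_inv (u : ℝ) (hu : 1 < u) (n : ℤ) (h : u + u⁻¹ = n) : 3 ≤ n ∧ u = eps n := by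
  have hu0 : 0 < u := by linarith
  have hi : u * u⁻¹ = 1 := mul_inv_cancel₀ hu0.ne'
  have hi1 : u⁻¹ < 1 := inv_lt_one_of_one_lt₀ hu
  constructor
  · have : (2 : ℝ) < n := by
      rw [← h]; nlinarith
    have : (2 : ℤ) < n := by exact_mod_cast this
    omega
  · unfold eps
    have : (n : ℝ) ^ 2 - 4 = (u - u⁻¹) ^ 2 := by rw [← h]; nlinarith
    rw [this, Real.sqrt_sq (by linarith), ← h]; ring

lemma eps_add_inv (n : ℤ) (hn : 3 ≤ n) : eps n + (eps n)⁻¹ = n := by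
  obtain ⟨s, -, -, h1, h2, -⟩ := eps_aux n hn
  rw [h2, h1]; ring

lemma eps_lt (l m : ℤ) (hl : 3 ≤ l) (h : l < m) : eps l < eps m := by
  have hn' : (3 : ℝ) ≤ l := by exact_mod_cast hl
  have h' : (l : ℝ) < m := by exact_mod_cast h
  have : Real.sqrt ((l : ℝ) ^ 2 - 4) ≤ Real.sqrt ((m : ℝ) ^ 2 - 4) :=
    Real.sqrt_le_sqrt (by nlinarith)
  unfold eps
  linarith

/-- same square class of discriminants -/
def RelD (a b : ℤ) : Prop := IsSquare ((((a : ℚ) ^ 2 - 4)) * ((b : ℚ) ^ 2 - 4))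

lemma RelD.symm' {a b : ℤ} (h : RelD a b) : RelD b a := by
  unfold RelD at *; rwa [mul_comm]

lemma RelD.trans' {a b c : ℤ} (hb : 3 ≤ b) (h : RelD a b) (h' : RelD b c) : RelD a c := by
  have hb' : (3 : ℚ) ≤ b := by exact_mod_cast hb
  have hb0 : ((b : ℚ) ^ 2 - 4) ≠ 0 := by nlinarith
  obtain ⟨x, hx⟩ := h
  obtain ⟨y, hy⟩ := h'
  refine ⟨x * y / ((b : ℚ) ^ 2 - 4), ?_⟩
  field_simp
  linear_combination (((b : ℚ) ^ 2 - 4) * ((c : ℚ) ^ 2 - 4)) * hx + x ^ 2 * hy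

lemma step (l m : ℤ) (hl : 3 ≤ l) (h : l < m) (hR : RelD m l) :
    ∃ m' : ℤ, 3 ≤ m' ∧ m' < m ∧ RelD m' l ∧ eps m = eps m' * eps l := by
  have hR0 : IsSquare ((m ^ 2 - 4) * (l ^ 2 - 4) : ℤ) := by
    rw [← Rat.isSquare_intCast_iff]; push_cast; exact hR
  obtain ⟨r0, hr0⟩ := hR0
  obtain ⟨r, hr, hrn⟩ : ∃ r : ℤ, (m ^ 2 - 4) * (l ^ 2 - 4) = r * r ∧ 0 ≤ r :=
    ⟨|r0|, by rw [hr0, abs_mul_abs_self], abs_nonneg _⟩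
  have hpar : Even (l * m - r) := by
    have h1 : Even (r * r - (l * m) * (l * m)) := by
      rw [← hr]; exact ⟨-2 * m ^ 2 - 2 * l ^ 2 + 8, by ring⟩
    rw [Int.even_sub, Int.even_mul, Int.even_mul (m := l * m)] at h1
    rw [Int.even_sub]
    tauto
  obtain ⟨m', hm'⟩ := hpar
  obtain ⟨s, hs0, hs, hs1, hs2, hs3⟩ := eps_aux l hl
  obtain ⟨t, ht0, ht, ht1, ht2, ht3⟩ := eps_aux m (by omega)
  have hst : s * t = r := by
    have hrn' : (0 : ℝ) ≤ r := by exact_mod_cast hrn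
    have : (s * t) ^ 2 = (r : ℝ) ^ 2 := by
      rw [mul_pow, hs, ht]
      have : (((m ^ 2 - 4) * (l ^ 2 - 4) : ℤ) : ℝ) = ((r * r : ℤ) : ℝ) := by rw [hr]
      push_cast at this
      linarith
    exact (pow_left_inj₀ (by positivity) hrn' two_ne_zero).1 this
  have hlt := eps_lt l m hl h
  have hmr : (l : ℝ) * m - r = m' + m' := by exact_mod_cast hm'
  have hu : 1 < eps m / eps l := by rw [one_lt_div (by linarith)]; exact hlt
  have huu : eps m / eps l + (eps m / eps l)⁻¹ = (m' : ℤ) := by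
    rw [inv_div, div_eq_mul_inv, div_eq_mul_inv, hs2, ht2, hs1, ht1]
    linarith
  obtain ⟨h3, he⟩ := eps_of_add_inv _ hu m' huu
  have hmul : eps m = eps m' * eps l := by
    rw [← he, div_mul_cancel₀ _ (by linarith)]
  refine ⟨m', h3, ?_, ?_, hmul⟩
  · by_contra hc
    have hle : eps m ≤ eps m' := by
      rcases (not_lt.1 hc).eq_or_lt with h' | h'
      · rw [h']
      · exact (eps_lt m m' (by omega) h').le
    nlinarith
  · refine ⟨((l : ℚ) * r - m * (l ^ 2 - 4)) / 2, ?_⟩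
    have hm2 : (m' : ℚ) = (l * m - r) / 2 := by
      have : (l : ℚ) * m - r = m' + m' := by exact_mod_cast hm'
      linarith
    have hr2 : ((m : ℚ) ^ 2 - 4) * (l ^ 2 - 4) = r * r := by exact_mod_cast hr
    rw [hm2]
    linear_combination hr2

lemma all_pow (l : ℤ) (hl : 3 ≤ l) (hmin : ∀ m : ℤ, 3 ≤ m → RelD m l → l ≤ m) (M : ℕ) :
    ∀ m : ℤ, m ≤ M → 3 ≤ m → RelD m l → ∃ k : ℕ, 1 ≤ k ∧ eps m = eps l ^ k := by
  induction M with
  | zero => intro m h1 h2; push_cast at h1; omega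
  | succ M ih =>
    intro m h1 h2 hR
    rcases (hmin m h2 hR).eq_or_lt with h | h
    · exact ⟨1, le_rfl, by rw [h, pow_one]⟩
    · obtain ⟨m', h3, hlt, hR', he⟩ := step l m hl h hR
      obtain ⟨k, hk, hk'⟩ := ih m' (by push_cast at h1; omega) h3 hR'
      exact ⟨k + 1, by omega, by rw [he, hk', pow_succ]⟩

lemma T_eq_min (n l : ℤ) (hn : n ∈ Tset) (hl : 3 ≤ l)
    (hmin : ∀ m : ℤ, 3 ≤ m → RelD m l → l ≤ m) (h : RelD n l) : n = l := by
  obtain ⟨h3, hne⟩ := hn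
  obtain ⟨k, hk, he⟩ := all_pow l hl hmin n.toNat n (by omega) h3 h
  by_cases hk1 : k = 1
  · subst hk1
    rw [pow_one] at he
    rcases lt_trichotomy n l with h' | h' | h'
    · exact absurd he (eps_lt n l h3 h').ne
    · exact h'
    · exact absurd he (eps_lt l n hl h').ne'
  · exact absurd ⟨k, by omega, l, hl, he⟩ hne

lemma T_eq (n m : ℤ) (hn : n ∈ Tset) (hm : m ∈ Tset) (h : RelD n m) : n = m := by
  classical
  have hex : ∃ a : ℕ, 3 ≤ a ∧ RelD a n :=
    ⟨n.toNat, by have := hn.1; omega, by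
      have := hn.1
      rw [Int.toNat_of_nonneg (by omega)]; exact ⟨_, rfl⟩⟩
  obtain ⟨hl3, hlR⟩ := Nat.find_spec hex
  have hmin' := fun a => @Nat.find_min' _ _ hex a
  generalize Nat.find hex = l at *
  have hl : (3 : ℤ) ≤ l := by exact_mod_cast hl3
  have hmin : ∀ a : ℤ, 3 ≤ a → RelD a l → (l : ℤ) ≤ a := by
    intro a ha hR
    have := hmin' a.toNat ⟨by omega, by
      rw [Int.toNat_of_nonneg (by omega)]; exact hR.trans' hl hlR⟩
    omega
  rw [T_eq_min n l hn hl hmin hlR.symm',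
    T_eq_min m l hm hl hmin (h.symm'.trans' hn.1 hlR.symm')]

/-- the algebraic numbers -/
noncomputable abbrev QB := algebraicClosure ℚ ℂ

instance : IsGalois ℚ QB := by
  have : IsAlgClosure ℚ QB := algebraicClosure.isAlgClosure ℚ ℂ
  have : Normal ℚ QB := IsAlgClosure.normal ℚ QB
  exact ⟨⟩

lemma exists_s (n : ℤ) (hn : 3 ≤ n) : ∃ s : QB, s ≠ 0 ∧ s ^ 2 = ((n : QB) ^ 2 - 4) ∧
    ((eps n : ℝ) : ℂ) = (((n + s) / 2 : QB) : ℂ) ∧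
    (((eps n)⁻¹ : ℝ) : ℂ) = (((n - s) / 2 : QB) : ℂ) := by
  obtain ⟨s, hs0, hs, hs1, hs2, hs3⟩ := eps_aux n hn
  have hsC : (s : ℂ) ^ 2 = (n : ℂ) ^ 2 - 4 := by exact_mod_cast congrArg (fun x : ℝ => (x : ℂ)) hs
  have hal : IsAlgebraic ℚ (s : ℂ) := by
    have : IsAlgebraic ℚ ((s : ℂ) ^ 2) := by
      rw [hsC]
      have := isAlgebraic_algebraMap (R := ℚ) (A := ℂ) ((n : ℚ) ^ 2 - 4)
      simpa using this
    exact this.of_pow (by norm_num)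
  refine ⟨⟨s, mem_algebraicClosure_iff.2 hal⟩, ?_, ?_, ?_, ?_⟩
  · intro h
    have := congrArg (fun x : QB => (x : ℂ)) h
    simp at this
    exact hs0.ne' this
  · apply Subtype.ext
    push_cast
    exact hsC
  · rw [hs1]; push_cast; rfl
  · rw [hs2]; push_cast; rfl

lemma sig_s (n : ℤ) (s : QB) (hs : s ^ 2 = ((n : QB) ^ 2 - 4)) (σ : QB ≃ₐ[ℚ] QB) :
    σ s = s ∨ σ s = -s := by
  apply sq_eq_sq_iff_eq_or_eq_neg.1
  rw [← map_pow, hs, map_sub, map_pow, map_intCast, map_ofNat]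

open Classical in
/-- sign character -/
noncomputable def chi (s : QB) (h0 : s ≠ 0) (h : ∀ σ : QB ≃ₐ[ℚ] QB, σ s = s ∨ σ s = -s) :
    (QB ≃ₐ[ℚ] QB) →* ℝ where
  toFun σ := if σ s = s then 1 else -1
  map_one' := by simp
  map_mul' σ τ := by
    have hne : -s ≠ s := by
      intro h; apply h0; exact self_eq_neg.1 h.symm
    rcases h σ with h1 | h1 <;> rcases h τ with h2 | h2 <;>
      simp [AlgEquiv.mul_apply, h1, h2, hne]

/-- The set `{log ε(n) : n ∈ 𝒯}` is linearly independent over `ℚ`. -/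
theorem log_eps_linearIndependent
    (N : ℕ) (n : Fin N → ℤ) (hn : ∀ i, n i ∈ Tset) (hinj : Function.Injective n)
    (k : Fin N → ℤ) (hk : ∃ i, k i ≠ 0) :
    ∑ i, (k i : ℝ) * Real.log (eps (n i)) ≠ 0 := by
  classical
  intro hsum
  choose s hs0 hs he hei using fun i => exists_s (n i) (hn i).1
  have hsig := fun i => sig_s (n i) (s i) (hs i)
  have hgt : ∀ i, 1 < eps (n i) := fun i => by
    obtain ⟨_, _, _, _, _, h⟩ := eps_aux (n i) (hn i).1
    exact h
  let χ : Fin N → ((QB ≃ₐ[ℚ] QB) →* ℝ) := fun i => chi (s i) (hs0 i) (hsig i)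
  have hχ : ∀ i σ, χ i σ = if σ (s i) = s i then 1 else -1 := fun i σ => rfl
  have hχinj : Function.Injective χ := by
    intro i j hij
    apply hinj
    apply T_eq _ _ (hn i) (hn j)
    have hfix : ∀ σ : QB ≃ₐ[ℚ] QB, σ (s i * s j) = s i * s j := by
      intro σ
      have h := DFunLike.congr_fun hij σ
      rw [hχ, hχ] at h
      rw [map_mul]
      by_cases h1 : σ (s i) = s i <;> by_cases h2 : σ (s j) = s j
      · rw [h1, h2]
      · rw [if_pos h1, if_neg h2] at h; norm_num at h
      · rw [if_neg h1, if_pos h2] at h; norm_num at h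
      · rw [(hsig i σ).resolve_left h1, (hsig j σ).resolve_left h2]; ring
    obtain ⟨q, hq⟩ := (InfiniteGalois.mem_range_algebraMap_iff_fixed (k := ℚ) (s i * s j)).2 hfix
    refine ⟨q, ?_⟩
    apply (algebraMap ℚ QB).injective
    rw [map_mul (algebraMap ℚ QB) q q, hq]
    simp only [map_mul, map_sub, map_pow, map_intCast, map_ofNat]
    rw [← hs i, ← hs j]; ring
  have hprod : ∏ i, ((n i + s i) / 2 : QB) ^ (k i) = 1 := by
    have h1 : ∏ i, (eps (n i)) ^ (k i) = 1 := by
      apply Real.eq_one_of_pos_of_log_eq_zero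
      · exact Finset.prod_pos fun i _ => zpow_pos (by linarith [hgt i]) _
      · rw [Real.log_prod (fun i _ => (zpow_pos (by linarith [hgt i]) _).ne')]
        simpa [Real.log_zpow] using hsum
    have h2 : ∏ i, ((eps (n i) : ℝ) : ℂ) ^ (k i) = 1 := by
      have := congrArg (fun x : ℝ => (x : ℂ)) h1
      push_cast at this
      exact this
    apply (algebraMap QB ℂ).injective
    rw [map_prod, map_one, ← h2]
    refine Finset.prod_congr rfl fun i _ => ?_
    rw [map_zpow₀, he]; rfl
  have hrel : ∀ σ : QB ≃ₐ[ℚ] QB, ∑ i, ((k i : ℝ) * Real.log (eps (n i))) * χ i σ = 0 := by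
    intro σ
    have h1 := congrArg σ hprod
    rw [map_prod, map_one] at h1
    have h2 := congrArg (algebraMap QB ℂ) h1
    rw [map_prod, map_one] at h2
    have h3 : ∏ i, (if σ (s i) = s i then eps (n i) else (eps (n i))⁻¹) ^ (k i) = 1 := by
      apply Complex.ofReal_injective
      rw [Complex.ofReal_prod, Complex.ofReal_one, ← h2]
      refine Finset.prod_congr rfl fun i _ => ?_
      rw [Complex.ofReal_zpow, map_zpow₀, map_zpow₀]
      congr 1
      split_ifs with hc
      · rw [he, map_div₀, map_add, map_intCast, map_ofNat, hc]; rfl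
      · rw [hei, map_div₀, map_add, map_intCast, map_ofNat, (hsig i σ).resolve_left hc, ← sub_eq_add_neg]; rfl
    have h4 := congrArg Real.log h3
    rw [Real.log_prod, Real.log_one] at h4
    · rw [← h4]
      refine Finset.sum_congr rfl fun i _ => ?_
      rw [hχ, Real.log_zpow]
      split_ifs <;> simp
    · intro i _
      have := hgt i
      apply zpow_ne_zero
      split_ifs
      · linarith
      · exact inv_ne_zero (by linarith)
  have hLI := (linearIndependent_monoidHom (QB ≃ₐ[ℚ] QB) ℝ).comp χ hχinj
  obtain ⟨i, hi⟩ := hk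
  have := Fintype.linearIndependent_iff.1 hLI (fun i => (k i : ℝ) * Real.log (eps (n i))) (by
    funext σ
    simpa using hrel σ) i
  have hlog : 0 < Real.log (eps (n i)) := Real.log_pos (hgt i)
  rcases mul_eq_zero.1 this with h | h
  · exact hi (by exact_mod_cast h)
  · exact hlog.ne' h
end

section
/- Let N ≥ 2 be an integer and let Γ̄(N) be the set of matrices γ ∈ SL₂(ℤ) with γ ≡ I (mod N) or γ ≡ −I (mod N), where I is the identity matrix. Then {tr γ : γ ∈ Γ̄(N), tr γ > 2} = {n ∈ ℤ : n ≥ 3 and (n ≡ 2 (mod N²) or n ≡ −2 (mod N²))}. -/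
/-- The trace set of the principal congruence subgroup `Γ̄(N)` (together with its
negatives) equals `{n ≥ 3 : n ≡ ±2 mod N²}`. -/
theorem trace_set_principal_congruence (N : ℕ) (hN : 2 ≤ N) :
    {n : ℤ | ∃ γ : Matrix.SpecialLinearGroup (Fin 2) ℤ,
        ((∀ i j, (N : ℤ) ∣ (γ.1 i j - (1 : Matrix (Fin 2) (Fin 2) ℤ) i j)) ∨
          (∀ i j, (N : ℤ) ∣ (γ.1 i j - (-1 : Matrix (Fin 2) (Fin 2) ℤ) i j))) ∧
        Matrix.trace γ.1 = n ∧ 2 < n}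
      = {n : ℤ | 3 ≤ n ∧ (n ≡ 2 [ZMOD ((N : ℤ) ^ 2)] ∨ n ≡ -2 [ZMOD ((N : ℤ) ^ 2)])} := by
  have hN0 : (N : ℤ) ≠ 0 := by
    have : N ≠ 0 := by omega
    exact_mod_cast this
  ext n
  simp only [Set.mem_setOf_eq]
  constructor
  · rintro ⟨γ, h, htr, hn⟩
    refine ⟨by omega, ?_⟩
    have hdet := γ.2
    rw [Matrix.det_fin_two] at hdet
    rw [Matrix.trace_fin_two] at htr
    rcases h with h | h
    · left
      obtain ⟨a, ha⟩ := h 0 0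
      obtain ⟨b, hb⟩ := h 0 1
      obtain ⟨c, hc⟩ := h 1 0
      obtain ⟨d, hd⟩ := h 1 1
      simp at ha hb hc hd
      have ha' : γ.1 0 0 = 1 + N * a := by linarith
      have hd' : γ.1 1 1 = 1 + N * d := by linarith
      have hb' : γ.1 0 1 = N * b := hb
      have hc' : γ.1 1 0 = N * c := hc
      rw [ha', hb', hc', hd'] at hdet
      rw [ha', hd'] at htr
      rw [Int.modEq_iff_dvd]
      exact ⟨a * d - b * c, by linear_combination htr - hdet⟩
    · right
      obtain ⟨a, ha⟩ := h 0 0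
      obtain ⟨b, hb⟩ := h 0 1
      obtain ⟨c, hc⟩ := h 1 0
      obtain ⟨d, hd⟩ := h 1 1
      simp at ha hb hc hd
      have ha' : γ.1 0 0 = -1 + N * a := by linarith
      have hd' : γ.1 1 1 = -1 + N * d := by linarith
      have hb' : γ.1 0 1 = N * b := hb
      have hc' : γ.1 1 0 = N * c := hc
      rw [ha', hb', hc', hd'] at hdet
      rw [ha', hd'] at htr
      rw [Int.modEq_iff_dvd]
      exact ⟨-(a * d - b * c), by linear_combination htr + hdet⟩
  · rintro ⟨hn, h | h⟩
    · obtain ⟨k, hk⟩ := (Int.modEq_iff_dvd.1 h.symm)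
      refine ⟨⟨!![1 + N ^ 2 * k, N * k; N, 1], ?_⟩, Or.inl ?_, ?_, by omega⟩
      · rw [Matrix.det_fin_two_of]; ring
      · intro i j
        fin_cases i <;> fin_cases j <;> simp
        exact Dvd.dvd.mul_right (dvd_pow_self _ two_ne_zero) _
      · rw [Matrix.trace_fin_two_of]; linarith
    · obtain ⟨k, hk⟩ := (Int.modEq_iff_dvd.1 h.symm)
      refine ⟨⟨!![-1 + N ^ 2 * k, -(N * k); N, -1], ?_⟩, Or.inr ?_, ?_, by omega⟩
      · rw [Matrix.det_fin_two_of]; ring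
      · intro i j
        fin_cases i <;> fin_cases j <;> simp
        exact Dvd.dvd.mul_right (dvd_pow_self _ two_ne_zero) _
      · rw [Matrix.trace_fin_two_of]; linarith
end

section
/- Let p be a prime and let Γ̄₁(p²) be the set of matrices γ ∈ SL₂(ℤ) such that γ or −γ is congruent modulo p² to an upper triangular unipotent matrix [[1, b],[0, 1]] for some integer b. Then {tr γ : γ ∈ Γ̄₁(p²), tr γ > 2} = {n ∈ ℤ : n ≥ 3 and (n ≡ 2 (mod p²) or n ≡ −2 (mod p²))}. -/
/-- The trace set of `Γ̄₁(p²)` (matrices `γ` with `γ` or `−γ` congruent mod `p²`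
to an upper triangular unipotent matrix) equals `{n ≥ 3 : n ≡ ±2 mod p²}`. -/
theorem trace_set_gamma1 (p : ℕ) (hp : p.Prime) :
    {n : ℤ | ∃ γ : Matrix.SpecialLinearGroup (Fin 2) ℤ,
        ((∃ b : ℤ, ∀ i j, ((p : ℤ) ^ 2) ∣ (γ.1 i j - !![(1 : ℤ), b; 0, 1] i j)) ∨
          (∃ b : ℤ, ∀ i j, ((p : ℤ) ^ 2) ∣ ((-γ.1) i j - !![(1 : ℤ), b; 0, 1] i j))) ∧
        Matrix.trace γ.1 = n ∧ 2 < n}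
      = {n : ℤ | 3 ≤ n ∧ (n ≡ 2 [ZMOD ((p : ℤ) ^ 2)] ∨ n ≡ -2 [ZMOD ((p : ℤ) ^ 2)])} := by
  generalize ((p : ℤ) ^ 2) = N
  ext n
  simp only [Set.mem_setOf_eq]
  constructor
  · rintro ⟨γ, h, ht, hn⟩
    refine ⟨by omega, ?_⟩
    rw [Matrix.trace_fin_two] at ht
    rcases h with ⟨b, h⟩ | ⟨b, h⟩
    · left
      have h0 := h 0 0
      have h1 := h 1 1
      simp at h0 h1
      apply Int.ModEq.symm
      rw [Int.modEq_iff_dvd, ← ht]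
      have := dvd_add h0 h1
      ring_nf at this ⊢
      exact this
    · right
      have h0 := h 0 0
      have h1 := h 1 1
      simp at h0 h1
      rw [Int.modEq_iff_dvd, ← ht]
      have := dvd_add h0 h1
      ring_nf at this ⊢
      exact this
  · rintro ⟨hn, h | h⟩
    · obtain ⟨k, hk⟩ := (Int.modEq_iff_dvd.mp h.symm)
      refine ⟨⟨!![1 + N * k, k; N, 1], by rw [Matrix.det_fin_two_of]; ring⟩, Or.inl ⟨k, ?_⟩, ?_, by omega⟩
      · intro i j
        fin_cases i <;> fin_cases j <;> simp
      · rw [Matrix.trace_fin_two]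
        simp
        linarith
    · obtain ⟨k, hk⟩ := (Int.modEq_iff_dvd.mp h.symm)
      refine ⟨⟨!![-1 + N * k, k; -N, -1], by rw [Matrix.det_fin_two_of]; ring⟩, Or.inr ⟨-k, ?_⟩, ?_, by omega⟩
      · intro i j
        fin_cases i <;> fin_cases j <;> simp
      · rw [Matrix.trace_fin_two]
        simp
        linarith
end

section
/- For every η > 0 there exists a constant C > 0 such that for every integer n ≥ 3, the set of conjugacy classes of the group SL₂(ℤ) whose elements have trace n is finite, and its cardinality is at most C·n^{1+η}. -/
open Finset in
theorem divisor_bound (ε : ℝ) (hε : 0 < ε) :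
    ∃ C : ℝ, 0 < C ∧ ∀ m : ℕ, m ≠ 0 → ((m.divisors.card : ℕ) : ℝ) ≤ C * (m : ℝ) ^ ε := by
  obtain ⟨P, hP⟩ := exists_nat_ge ((2 : ℝ) ^ (1 / ε))
  have hl : 0 < Real.log 2 := Real.log_pos (by norm_num)
  set K : ℝ := max 1 (1 / (ε * Real.log 2)) with hK
  have hK1 : 1 ≤ K := le_max_left _ _
  have hK2 : 1 ≤ K * (ε * Real.log 2) := by
    have : 1 / (ε * Real.log 2) ≤ K := le_max_right _ _
    rwa [div_le_iff₀ (by positivity)] at this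
  have key : ∀ p v : ℕ, 2 ≤ p →
      ((v : ℝ) + 1) ≤ (if p < P then K else 1) * ((p : ℝ) ^ v) ^ ε := by
    intro p v hp
    have hp0 : (2 : ℝ) ≤ p := by exact_mod_cast hp
    have e : ((p : ℝ) ^ v) ^ ε = ((p : ℝ) ^ ε) ^ v := by
      rw [← Real.rpow_natCast, ← Real.rpow_natCast, ← Real.rpow_mul (by positivity),
        ← Real.rpow_mul (by positivity), mul_comm]
    split_ifs with h
    · have h1 : 1 + ε * Real.log 2 ≤ (p : ℝ) ^ ε := by
        calc 1 + ε * Real.log 2 ≤ Real.exp (ε * Real.log 2) := by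
              linarith [Real.add_one_le_exp (ε * Real.log 2)]
          _ = (2 : ℝ) ^ ε := by rw [Real.rpow_def_of_pos (by norm_num), mul_comm]
          _ ≤ _ := Real.rpow_le_rpow (by norm_num) hp0 hε.le
      have h2 : 1 + (v : ℝ) * (ε * Real.log 2) ≤ (1 + ε * Real.log 2) ^ v :=
        one_add_mul_le_pow (by nlinarith [mul_pos hε hl]) v
      have h3 : (1 + ε * Real.log 2) ^ v ≤ ((p : ℝ) ^ ε) ^ v :=
        pow_le_pow_left₀ (by positivity) h1 v
      rw [e]
      have hv : (0 : ℝ) ≤ v := by positivity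
      calc (v : ℝ) + 1 ≤ K * (1 + (v : ℝ) * (ε * Real.log 2)) := by nlinarith
        _ ≤ _ := mul_le_mul_of_nonneg_left (h2.trans h3) (by linarith)
    · have h1 : (2 : ℝ) ≤ (p : ℝ) ^ ε := by
        have hpP : (2 : ℝ) ^ (1 / ε) ≤ p := hP.trans (by exact_mod_cast not_lt.mp h)
        calc (2 : ℝ) = ((2 : ℝ) ^ (1 / ε)) ^ ε := by
              rw [← Real.rpow_mul (by norm_num), one_div_mul_cancel hε.ne', Real.rpow_one]
          _ ≤ _ := Real.rpow_le_rpow (by positivity) hpP hε.le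
      rw [e, one_mul]
      have h2 : (v : ℝ) + 1 ≤ 2 ^ v := by exact_mod_cast Nat.lt_two_pow_self
      exact h2.trans (pow_le_pow_left₀ (by norm_num) h1 v)
  refine ⟨K ^ P, by positivity, fun m hm => ?_⟩
  have hm' : (m : ℝ) ^ ε = ∏ p ∈ m.primeFactors, ((p : ℝ) ^ (m.factorization p)) ^ ε := by
    rw [Real.finsetProd_rpow _ _ (fun i _ => by positivity)]
    congr 1
    conv_lhs => rw [← Nat.prod_factorization_pow_eq_self hm]
    simp [Finsupp.prod]
  rw [Nat.card_divisors hm, hm']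
  push_cast
  calc ∏ p ∈ m.primeFactors, ((m.factorization p : ℝ) + 1)
      ≤ ∏ p ∈ m.primeFactors,
          ((if p < P then K else 1) * ((p : ℝ) ^ (m.factorization p)) ^ ε) :=
        Finset.prod_le_prod (fun _ _ => by positivity)
          (fun p hp => key p _ (Nat.prime_of_mem_primeFactors hp).two_le)
    _ = (∏ p ∈ m.primeFactors, (if p < P then K else 1)) *
          ∏ p ∈ m.primeFactors, ((p : ℝ) ^ (m.factorization p)) ^ ε := Finset.prod_mul_distrib
    _ ≤ _ := by
      refine mul_le_mul_of_nonneg_right ?_ (Finset.prod_nonneg fun _ _ => by positivity)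
      rw [← Finset.prod_filter, Finset.prod_const]
      refine pow_le_pow_right₀ hK1 ?_
      calc _ ≤ (Finset.range P).card := Finset.card_le_card (fun p hp => by
            simp only [Finset.mem_filter] at hp; simpa using hp.2)
        _ = P := by simp

theorem exists_shift (t c : ℤ) (hc : c ≠ 0) : ∃ k : ℤ, |t - 2 * k * c| ≤ |c| := by
  have h1 := Int.emod_nonneg (t + |c|) (b := 2 * |c|) (by simpa using hc)
  have h2 := Int.emod_lt_of_pos (t + |c|) (b := 2 * |c|) (by positivity)
  have h3 := Int.emod_add_mul_ediv (t + |c|) (2 * |c|)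
  set q := (t + |c|) / (2 * |c|)
  rcases abs_cases c with ⟨h, _⟩ | ⟨h, _⟩
  · refine ⟨q, abs_le.2 ?_⟩
    rw [h] at h1 h2 h3 ⊢
    constructor <;> nlinarith
  · refine ⟨-q, abs_le.2 ?_⟩
    rw [h] at h1 h2 h3 ⊢
    constructor <;> nlinarith


theorem shift_entries (k : ℤ) (γ : Matrix.SpecialLinearGroup (Fin 2) ℤ) : ∃ δ : Matrix.SpecialLinearGroup (Fin 2) ℤ, IsConj γ δ ∧
    δ.1 1 0 = γ.1 1 0 ∧ δ.1 1 1 - δ.1 0 0 = γ.1 1 1 - γ.1 0 0 - 2 * k * γ.1 1 0 := by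
  let g : Matrix.SpecialLinearGroup (Fin 2) ℤ := ⟨!![1, k; 0, 1], by simp⟩
  have e : (g * γ * g⁻¹).1 = !![1, k; 0, 1] * γ.1 * !![1, -k; 0, 1] := by
    change g.1 * γ.1 * (g⁻¹).1 = _
    congr 1
    change Matrix.adjugate !![1, k; 0, 1] = _
    rw [Matrix.adjugate_fin_two_of]
    simp
  refine ⟨g * γ * g⁻¹, isConj_iff.2 ⟨g, rfl⟩, ?_, ?_⟩
  · rw [e]; simp [Matrix.mul_apply, Matrix.vecMul, dotProduct, Fin.sum_univ_two]
  · rw [e]; simp [Matrix.mul_apply, Matrix.vecMul, dotProduct, Fin.sum_univ_two]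
    ring

theorem swap_entries (γ : Matrix.SpecialLinearGroup (Fin 2) ℤ) : ∃ δ : Matrix.SpecialLinearGroup (Fin 2) ℤ, IsConj γ δ ∧ δ.1 1 0 = - γ.1 0 1 := by
  let g : Matrix.SpecialLinearGroup (Fin 2) ℤ := ⟨!![0, -1; 1, 0], by simp⟩
  have e : (g * γ * g⁻¹).1 = !![0, -1; 1, 0] * γ.1 * !![0, 1; -1, 0] := by
    change g.1 * γ.1 * (g⁻¹).1 = _
    congr 1
    change Matrix.adjugate !![0, -1; 1, 0] = _
    rw [Matrix.adjugate_fin_two_of]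
    simp
  refine ⟨g * γ * g⁻¹, isConj_iff.2 ⟨g, rfl⟩, ?_⟩
  rw [e]; simp [Matrix.mul_apply, Matrix.vecMul, dotProduct, Fin.sum_univ_two]

theorem trace_conj {γ δ : Matrix.SpecialLinearGroup (Fin 2) ℤ} (h : IsConj γ δ) : Matrix.trace γ.1 = Matrix.trace δ.1 := by
  obtain ⟨g, rfl⟩ := isConj_iff.1 h
  have : (g * γ * g⁻¹).1 = g.1 * (γ * g⁻¹).1 := by rw [mul_assoc]; rfl
  rw [this, Matrix.trace_mul_comm]
  have : (γ * g⁻¹).1 * g.1 = (γ * g⁻¹ * g).1 := rfl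
  rw [this]; simp

theorem disc_eq {n : ℤ} {γ : Matrix.SpecialLinearGroup (Fin 2) ℤ} (h : Matrix.trace γ.1 = n) :
    n ^ 2 - 4 - (γ.1 1 1 - γ.1 0 0) ^ 2 = 4 * (γ.1 0 1 * γ.1 1 0) := by
  have hd := γ.2
  rw [Matrix.det_fin_two] at hd
  rw [Matrix.trace_fin_two] at h
  subst h
  linear_combination 4 * hd

theorem lower_ne {n : ℤ} (hn : 3 ≤ n) {γ : Matrix.SpecialLinearGroup (Fin 2) ℤ} (h : Matrix.trace γ.1 = n) :
    γ.1 0 1 * γ.1 1 0 ≠ 0 := by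
  intro h0
  have := disc_eq h
  rw [h0] at this
  set t := γ.1 1 1 - γ.1 0 0
  have h1 : |t| < n := by apply abs_lt_of_sq_lt_sq <;> linarith
  have h2 : |t| ≤ n - 1 := by omega
  have h3 : |t| ^ 2 = t ^ 2 := sq_abs t
  nlinarith [abs_nonneg t]

theorem reduce {n : ℤ} (hn : 3 ≤ n) (γ : Matrix.SpecialLinearGroup (Fin 2) ℤ) (h : Matrix.trace γ.1 = n) :
    ∃ δ : Matrix.SpecialLinearGroup (Fin 2) ℤ, IsConj γ δ ∧ Matrix.trace δ.1 = n ∧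
      |δ.1 1 1 - δ.1 0 0| ≤ |δ.1 1 0| ∧ |δ.1 1 0| ≤ |δ.1 0 1| := by
  classical
  have hex : ∃ N : ℕ, ∃ δ : Matrix.SpecialLinearGroup (Fin 2) ℤ, IsConj γ δ ∧ (δ.1 1 0).natAbs = N := ⟨_, γ, IsConj.refl _, rfl⟩
  obtain ⟨δ, hδ, hN⟩ := Nat.find_spec hex
  have hmin : ∀ δ' : Matrix.SpecialLinearGroup (Fin 2) ℤ, IsConj γ δ' → (δ.1 1 0).natAbs ≤ (δ'.1 1 0).natAbs := fun δ' h' => by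
    rw [hN]; exact Nat.find_min' hex ⟨δ', h', rfl⟩
  have hc : δ.1 1 0 ≠ 0 := right_ne_zero_of_mul (lower_ne hn ((trace_conj hδ).symm.trans h))
  obtain ⟨k, hk⟩ := exists_shift (δ.1 1 1 - δ.1 0 0) (δ.1 1 0) hc
  obtain ⟨δ', h1, h2, h3⟩ := shift_entries k δ
  have hδ' := hδ.trans h1
  refine ⟨δ', hδ', (trace_conj hδ').symm.trans h, ?_, ?_⟩
  · rw [h3, h2]; exact hk
  · obtain ⟨δ'', h4, h5⟩ := swap_entries δ'
    have := hmin δ'' (hδ'.trans h4)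
    rw [h5, ← h2, Int.natAbs_neg] at this
    rw [Int.abs_eq_natAbs, Int.abs_eq_natAbs]
    exact_mod_cast this

theorem entries_unique {n : ℤ} (hn : 3 ≤ n) {γ δ : Matrix.SpecialLinearGroup (Fin 2) ℤ} (hγ : Matrix.trace γ.1 = n)
    (hδ : Matrix.trace δ.1 = n) (ht : γ.1 1 1 - γ.1 0 0 = δ.1 1 1 - δ.1 0 0)
    (hc : γ.1 1 0 = δ.1 1 0) : γ = δ := by
  have h1 := disc_eq hγ
  have h2 := disc_eq hδ
  have hc0 : δ.1 1 0 ≠ 0 := right_ne_zero_of_mul (lower_ne hn hδ)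
  rw [ht, hc] at h1
  have hb : γ.1 0 1 = δ.1 0 1 := mul_right_cancel₀ hc0 (by linarith)
  rw [Matrix.trace_fin_two] at hγ hδ
  apply Subtype.ext
  ext i j
  fin_cases i <;> fin_cases j
  · change γ.1 0 0 = δ.1 0 0; linarith
  · exact hb
  · exact hc
  · change γ.1 1 1 = δ.1 1 1; linarith

/-- The candidate pairs `(t, c)` for reduced matrices of trace `n`. -/
noncomputable def candidates (n : ℤ) : Finset (ℤ × ℤ) :=
  (Finset.Icc (-n) n).biUnion fun t =>
    ((n ^ 2 - 4 - t ^ 2).toNat.divisors.image fun u : ℕ => (t, (u : ℤ))) ∪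
    ((n ^ 2 - 4 - t ^ 2).toNat.divisors.image fun u : ℕ => (t, -(u : ℤ)))

theorem reduced_mem {n : ℤ} (hn : 3 ≤ n) {δ : Matrix.SpecialLinearGroup (Fin 2) ℤ} (h : Matrix.trace δ.1 = n)
    (h1 : |δ.1 1 1 - δ.1 0 0| ≤ |δ.1 1 0|) (h2 : |δ.1 1 0| ≤ |δ.1 0 1|) :
    (δ.1 1 1 - δ.1 0 0, δ.1 1 0) ∈ candidates n := by
  have hd := disc_eq h
  have hne := lower_ne hn h
  set t := δ.1 1 1 - δ.1 0 0
  set c := δ.1 1 0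
  set b := δ.1 0 1
  have ht : t ^ 2 ≤ |b * c| := by
    rw [abs_mul, ← sq_abs t]
    nlinarith [abs_nonneg t, abs_nonneg c]
  have hpos : 0 < b * c := by
    by_contra hcon
    rw [abs_of_nonpos (not_lt.1 hcon)] at ht
    have : b * c < 0 := lt_of_le_of_ne (not_lt.1 hcon) hne
    nlinarith
  have htn : |t| ≤ n := by apply abs_le_of_sq_le_sq <;> nlinarith
  have hdv : c.natAbs ∈ (n ^ 2 - 4 - t ^ 2).toNat.divisors := by
    rw [Nat.mem_divisors]
    constructor
    · rw [← Int.natCast_dvd_natCast, Int.toNat_of_nonneg (by linarith), Int.natAbs_dvd, hd]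
      exact ⟨4 * b, by ring⟩
    · have : 0 < n ^ 2 - 4 - t ^ 2 := by linarith
      omega
  simp only [candidates, Finset.mem_biUnion, Finset.mem_union, Finset.mem_image]
  refine ⟨t, Finset.mem_Icc.2 (abs_le.1 htn), ?_⟩
  rcases Int.natAbs_eq c with hc | hc
  · exact Or.inl ⟨c.natAbs, hdv, by rw [← hc]⟩
  · exact Or.inr ⟨c.natAbs, hdv, by rw [← hc]⟩

theorem candidates_card (η : ℝ) (hη : 0 < η) : ∃ C : ℝ, 0 < C ∧ ∀ n : ℤ, 3 ≤ n →
    ((candidates n).card : ℝ) ≤ C * (n : ℝ) ^ ((1 : ℝ) + η) := by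
  obtain ⟨C, hC, hdiv⟩ := divisor_bound (η / 2) (by positivity)
  refine ⟨6 * C, by positivity, fun n hn => ?_⟩
  have hn' : (3 : ℝ) ≤ n := by exact_mod_cast hn
  have hb : ∀ t : ℤ, (((n ^ 2 - 4 - t ^ 2).toNat.divisors.card : ℕ) : ℝ) ≤ C * (n : ℝ) ^ η := by
    intro t
    by_cases h0 : (n ^ 2 - 4 - t ^ 2).toNat = 0
    · rw [h0]; simp; positivity
    · refine (hdiv _ h0).trans (mul_le_mul_of_nonneg_left ?_ hC.le)
      have h1 : (((n ^ 2 - 4 - t ^ 2).toNat : ℕ) : ℝ) ≤ (n : ℝ) ^ 2 := by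
        have : (((n ^ 2 - 4 - t ^ 2).toNat : ℕ) : ℤ) ≤ n ^ 2 := by
          rw [Int.toNat_of_nonneg (by omega)]; nlinarith [sq_nonneg t]
        exact_mod_cast this
      calc _ ≤ ((n : ℝ) ^ 2) ^ (η / 2) := Real.rpow_le_rpow (by positivity) h1 (by positivity)
        _ = (n : ℝ) ^ η := by
          rw [← Real.rpow_natCast, ← Real.rpow_mul (by linarith)]
          congr 1; push_cast; ring
  have hcard : ((candidates n).card : ℝ) ≤
      ∑ t ∈ Finset.Icc (-n) n, 2 * (C * (n : ℝ) ^ η) := by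
    have h1 : (candidates n).card ≤ ∑ t ∈ Finset.Icc (-n) n,
        2 * (n ^ 2 - 4 - t ^ 2).toNat.divisors.card := by
      refine Finset.card_biUnion_le.trans (Finset.sum_le_sum fun t _ => ?_)
      refine (Finset.card_union_le _ _).trans ?_
      rw [two_mul]
      exact add_le_add Finset.card_image_le Finset.card_image_le
    refine (Nat.cast_le.2 h1).trans ?_
    push_cast
    exact Finset.sum_le_sum fun t _ => by linarith [hb t]
  refine hcard.trans ?_
  rw [Finset.sum_const, Int.card_Icc, nsmul_eq_mul, Real.rpow_add (by linarith), Real.rpow_one]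
  have h2 : (((n + 1 - -n).toNat : ℕ) : ℝ) ≤ 3 * n := by
    have : (((n + 1 - -n).toNat : ℕ) : ℤ) ≤ 3 * n := by omega
    exact_mod_cast this
  have h3 : 0 ≤ 2 * (C * (n : ℝ) ^ η) := by positivity
  calc _ ≤ 3 * (n : ℝ) * (2 * (C * (n : ℝ) ^ η)) := mul_le_mul_of_nonneg_right h2 h3
    _ = _ := by ring

open Classical in
/-- The class of the matrix with data `(t, c)` and trace `n`. -/
noncomputable def classOf (n : ℤ) (p : ℤ × ℤ) : ConjClasses (Matrix.SpecialLinearGroup (Fin 2) ℤ) :=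
  if h : ∃ δ : Matrix.SpecialLinearGroup (Fin 2) ℤ, Matrix.trace δ.1 = n ∧ δ.1 1 1 - δ.1 0 0 = p.1 ∧ δ.1 1 0 = p.2 then
    ConjClasses.mk h.choose else 1

theorem classOf_eq {n : ℤ} (hn : 3 ≤ n) {δ : Matrix.SpecialLinearGroup (Fin 2) ℤ} (h : Matrix.trace δ.1 = n) :
    classOf n (δ.1 1 1 - δ.1 0 0, δ.1 1 0) = ConjClasses.mk δ := by
  have hex : ∃ δ' : Matrix.SpecialLinearGroup (Fin 2) ℤ, Matrix.trace δ'.1 = n ∧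
      δ'.1 1 1 - δ'.1 0 0 = (δ.1 1 1 - δ.1 0 0, δ.1 1 0).1 ∧
      δ'.1 1 0 = (δ.1 1 1 - δ.1 0 0, δ.1 1 0).2 := ⟨δ, h, rfl, rfl⟩
  rw [classOf, dif_pos hex]
  obtain ⟨h1, h2, h3⟩ := hex.choose_spec
  rw [entries_unique hn h1 h h2 h3]

/-- For every `η > 0` there is `C > 0` such that for every integer `n ≥ 3`, the set of
conjugacy classes of `SL₂(ℤ)` whose elements have trace `n` is finite of cardinality
at most `C·n^(1+η)`. -/
theorem conjClasses_trace_bound (η : ℝ) (hη : 0 < η) :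
    ∃ C : ℝ, 0 < C ∧ ∀ n : ℤ, 3 ≤ n →
      {c : ConjClasses (Matrix.SpecialLinearGroup (Fin 2) ℤ) |
          ∃ γ ∈ c.carrier, Matrix.trace (γ : Matrix.SpecialLinearGroup (Fin 2) ℤ).1 = n}.Finite ∧
      (({c : ConjClasses (Matrix.SpecialLinearGroup (Fin 2) ℤ) |
          ∃ γ ∈ c.carrier, Matrix.trace (γ : Matrix.SpecialLinearGroup (Fin 2) ℤ).1 = n}.ncard : ℝ))
        ≤ C * (n : ℝ) ^ ((1 : ℝ) + η) := by
  obtain ⟨C, hC, hcard⟩ := candidates_card η hη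
  refine ⟨C, hC, fun n hn => ?_⟩
  have hsub : {c : ConjClasses (Matrix.SpecialLinearGroup (Fin 2) ℤ) |
      ∃ γ ∈ c.carrier, Matrix.trace (γ : Matrix.SpecialLinearGroup (Fin 2) ℤ).1 = n} ⊆
      classOf n '' (candidates n : Set (ℤ × ℤ)) := by
    rintro c ⟨γ, hγ, htr⟩
    obtain ⟨δ, h1, h2, h3, h4⟩ := reduce hn γ htr
    refine ⟨_, reduced_mem hn h2 h3 h4, ?_⟩
    rw [classOf_eq hn h2, ← ConjClasses.mk_eq_mk_iff_isConj.2 h1]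
    exact ConjClasses.mem_carrier_iff_mk_eq.1 hγ
  have hfin : (classOf n '' (candidates n : Set (ℤ × ℤ))).Finite :=
    (candidates n).finite_toSet.image _
  refine ⟨hfin.subset hsub, le_trans ?_ (hcard n hn)⟩
  have h1 := Set.ncard_le_ncard hsub hfin
  have h2 := Set.ncard_image_le (f := classOf n) (candidates n).finite_toSet
  rw [Set.ncard_coe_finset] at h2
  exact_mod_cast h1.trans h2
end

section
/- Let σ > 3/4 be a real number and let η be a real number with 0 < η < 2σ − 3/2. Then the series Σ_{n ≥ 3, n ∉ 𝒯} n^{1+η} · ε(n)^{−2σ}, taken over the integers n ≥ 3 not belonging to 𝒯, converges. -/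
theorem eps_ge_sub_one (n : ℤ) (hn : 3 ≤ n) : (n : ℝ) - 1 ≤ eps n := by
  have h : (3 : ℝ) ≤ n := by exact_mod_cast hn
  have : (n : ℝ) - 2 ≤ Real.sqrt ((n : ℝ) ^ 2 - 4) := by
    apply Real.le_sqrt_of_sq_le
    nlinarith
  unfold eps
  linarith

theorem eps_quad (n : ℤ) (hn : 3 ≤ n) : eps n ^ 2 + 1 = n * eps n := by
  have h : (3 : ℝ) ≤ n := by exact_mod_cast hn
  have := Real.sq_sqrt (show (0 : ℝ) ≤ (n : ℝ) ^ 2 - 4 by nlinarith)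
  unfold eps
  nlinarith

theorem eps_inj (m n : ℤ) (hm : 3 ≤ m) (hn : 3 ≤ n) (h : eps m = eps n) : m = n := by
  have h1 := eps_quad m hm
  have h2 := eps_quad n hn
  have h3 := eps_ge_sub_one n hn
  have h' : (3 : ℝ) ≤ n := by exact_mod_cast hn
  rw [h] at h1
  have : (m : ℝ) = n := mul_right_cancel₀ (show eps n ≠ 0 by linarith) (h1.symm.trans h2)
  exact_mod_cast this

/-- For `σ > 3/4` and `0 < η < 2σ − 3/2`, the series
`Σ_{n ≥ 3, n ∉ 𝒯} n^{1+η} ε(n)^{−2σ}` converges. -/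
theorem summable_complement_Tset (σ η : ℝ) (hσ : 3 / 4 < σ) (hη : 0 < η)
    (hη' : η < 2 * σ - 3 / 2) :
    Summable (fun n : {n : ℤ // 3 ≤ n ∧ n ∉ Tset} =>
      ((n : ℤ) : ℝ) ^ ((1 : ℝ) + η) * eps n ^ (-(2 * σ))) := by
  obtain ⟨a, ha⟩ : ∃ a : ℝ, a = 2 * σ - 1 - η := ⟨_, rfl⟩
  have ha2 : 1 / 2 < a := by linarith
  have key : ∀ n : {n : ℤ // 3 ≤ n ∧ n ∉ Tset}, ∃ j : ℕ, ∃ m : ℤ, 3 ≤ m ∧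
      eps n = eps m ^ (j + 2) := by
    rintro ⟨n, hn, hT⟩
    simp only [Tset, Set.mem_setOf_eq, not_and, not_not] at hT
    obtain ⟨k, hk, m, hm, h⟩ := hT hn
    exact ⟨k - 2, m, hm, by rw [h]; congr 1; omega⟩
  choose j m hm hjm using key
  have hr0 : (0 : ℝ) ≤ (2 : ℝ) ^ (-a) := by positivity
  have hr1 : (2 : ℝ) ^ (-a) < 1 :=
    Real.rpow_lt_one_of_one_lt_of_neg (by norm_num) (by linarith)
  have hs : Summable (fun x : ℕ × ℕ => ((2 : ℝ) ^ (-a)) ^ x.1 * (x.2 : ℝ) ^ (-(2 * a))) :=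
    (summable_geometric_of_lt_one hr0 hr1).mul_of_nonneg
      (Real.summable_nat_rpow.2 (by linarith)) (fun _ => by positivity)
      (fun _ => by positivity)
  have hinj : Function.Injective (fun n => (j n, (m n - 1).toNat)) := by
    intro x y hxy
    simp only [Prod.mk.injEq] at hxy
    have h1 := hm x
    have h2 := hm y
    have h3 : m x = m y := by omega
    apply Subtype.ext
    apply eps_inj _ _ x.2.1 y.2.1
    rw [hjm, hjm, h3, hxy.1]
  refine Summable.of_nonneg_of_le ?_ ?_ ((hs.comp_injective hinj).mul_left ((2 : ℝ) ^ (1 + η)))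
  · intro n
    have h1 : (3 : ℝ) ≤ (n : ℤ) := by exact_mod_cast n.2.1
    have h2 := eps_ge_sub_one n n.2.1
    have h3 : 0 < eps n := by linarith
    positivity
  · intro n
    have h1 : (3 : ℝ) ≤ (n : ℤ) := by exact_mod_cast n.2.1
    have h2 := eps_ge_sub_one n n.2.1
    have h3 : 0 < eps n := by linarith
    have g1 : (3 : ℝ) ≤ m n := by exact_mod_cast hm n
    have g2 := eps_ge_sub_one (m n) (hm n)
    have g3 : 0 < eps (m n) := by linarith
    have hc : (((m n - 1).toNat : ℕ) : ℝ) = (m n : ℝ) - 1 := by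
      have h4 : (((m n - 1).toNat : ℕ) : ℤ) = m n - 1 := Int.toNat_of_nonneg (by linarith [hm n])
      exact_mod_cast congrArg (Int.cast : ℤ → ℝ) h4
    simp only [Function.comp, hc]
    have e1 : ((n : ℤ) : ℝ) ^ (1 + η) ≤ 2 ^ (1 + η) * eps n ^ (1 + η) := by
      rw [← Real.mul_rpow (by norm_num) h3.le]
      exact Real.rpow_le_rpow (by linarith) (by linarith) (by linarith)
    have e2 : eps n ^ (1 + η) * eps n ^ (-(2 * σ)) = (eps (m n) ^ (-a)) ^ (j n)
        * eps (m n) ^ (-(2 * a)) := by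
      rw [← Real.rpow_add h3, hjm, ← Real.rpow_natCast, ← Real.rpow_natCast, ← Real.rpow_mul g3.le,
        ← Real.rpow_mul g3.le, ← Real.rpow_add g3]
      congr 1
      push_cast
      rw [ha]
      ring
    have e3 : eps (m n) ^ (-a) ≤ 2 ^ (-a) :=
      Real.rpow_le_rpow_of_nonpos (by norm_num) (by linarith) (by linarith)
    have e4 : eps (m n) ^ (-(2 * a)) ≤ ((m n : ℝ) - 1) ^ (-(2 * a)) :=
      Real.rpow_le_rpow_of_nonpos (by linarith) g2 (by linarith)
    calc _ ≤ (2 ^ (1 + η) * eps n ^ (1 + η)) * eps n ^ (-(2 * σ)) :=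
          mul_le_mul_of_nonneg_right e1 (by positivity)
      _ = 2 ^ (1 + η) * ((eps (m n) ^ (-a)) ^ (j n) * eps (m n) ^ (-(2 * a))) := by
          rw [mul_assoc, e2]
      _ ≤ _ := by gcongr
end
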